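/- arXiv:1911.05662 — 3 statements merged into one kernel-verified Lean document; each statement's English description precedes it below -/
import Mathlib

section
/- Let R > 0, S > 0, and let u₁, k₁, z₁, u₂, k₂, z₂ be positive real numbers satisfying u₁k₁/R + u₂k₂/R + z₁k₁ + z₂k₂ + u₁z₁ + u₂z₂ ≤ S. Then u₁k₁z₁ + u₂k₂z₂ ≤ S·√(R·S)/(3·√3). -/
/-!
The three summands of the footprint `m = u * k / R + z * k + u * z` of a block have product
`(u * k * z) ^ 2 / R`, so AM-GM gives `u * k * z ≤ m * √(R * m) / (3 * √3)`. No single footprint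
exceeds the capacity `S`; replacing `√(R * m)` by `√(R * S)` makes the bound linear in `m`, and it
can then be summed over the blocks.
-/

open Finset

theorem prod_le_arith_mean_pow_card {ι : Type*} (s : Finset ι) (x : ι → ℝ)
    (hx : ∀ i ∈ s, 0 ≤ x i) : ∏ i ∈ s, x i ≤ ((∑ i ∈ s, x i) / #s) ^ #s := by
  obtain rfl | hs := s.eq_empty_or_nonempty
  · simp
  have hcard : (0 : ℝ) < #s := mod_cast hs.card_pos
  have amgm : (∏ i ∈ s, x i) ^ (#s : ℝ)⁻¹ ≤ (∑ i ∈ s, x i) / #s := by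
    simpa using Real.geom_mean_le_arith_mean s (fun _ ↦ 1) x (by simp) (by simpa using hs) hx
  rwa [Real.rpow_inv_le_iff_of_pos (prod_nonneg hx)
    (div_nonneg (sum_nonneg hx) hcard.le) hcard, Real.rpow_natCast] at amgm

theorem mul_mul_le_arith_mean_pow_three {a b c : ℝ} (ha : 0 ≤ a) (hb : 0 ≤ b) (hc : 0 ≤ c) :
    a * b * c ≤ ((a + b + c) / 3) ^ 3 := by
  simpa [Fin.prod_univ_three, Fin.sum_univ_three] using
    prod_le_arith_mean_pow_card univ ![a, b, c] (by simp [Fin.forall_fin_succ, ha, hb, hc])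

/-- The on-chip memory taken by an output block: `u * k` inputs, shared `R`-fold by sliding-window
reuse, together with `z * k` weights and `u * z` outputs. All sizes are relaxed to real numbers. -/
noncomputable def blockFootprint (R u k z : ℝ) : ℝ :=
  u * k / R + z * k + u * z

section OneBlock

variable {R u k z : ℝ}

theorem blockFootprint_nonneg (hR : 0 ≤ R) (hu : 0 ≤ u) (hk : 0 ≤ k) (hz : 0 ≤ z) :
    0 ≤ blockFootprint R u k z := by
  unfold blockFootprint
  positivity

theorem sq_mul_mul_le_blockFootprint_pow (hR : 0 < R) (hu : 0 ≤ u) (hk : 0 ≤ k) (hz : 0 ≤ z) :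
    (u * k * z) ^ 2 ≤ R * (blockFootprint R u k z / 3) ^ 3 := by
  calc (u * k * z) ^ 2 = R * (u * k / R * (z * k) * (u * z)) := by field_simp
    _ ≤ R * (blockFootprint R u k z / 3) ^ 3 := by
      gcongr
      exact mul_mul_le_arith_mean_pow_three (by positivity) (by positivity) (by positivity)

theorem mul_mul_le_blockFootprint_mul_sqrt (hR : 0 < R) (hu : 0 ≤ u) (hk : 0 ≤ k) (hz : 0 ≤ z) :
    u * k * z ≤ blockFootprint R u k z * √(R * blockFootprint R u k z) / (3 * √3) := by
  have hm := blockFootprint_nonneg hR.le hu hk hz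
  have hsq := sq_mul_mul_le_blockFootprint_pow hR hu hk hz
  set m := blockFootprint R u k z
  refine le_of_sq_le_sq ?_ (by positivity)
  calc (u * k * z) ^ 2 ≤ R * (m / 3) ^ 3 := hsq
    _ = m ^ 2 * (R * m) / (3 ^ 2 * 3) := by ring
    _ = (m * √(R * m) / (3 * √3)) ^ 2 := by
      rw [div_pow, mul_pow, mul_pow, Real.sq_sqrt (by positivity), Real.sq_sqrt (by positivity)]

end OneBlock

theorem two_block_term_bound_general {ι : Type*} (s : Finset ι) (R S : ℝ) (u k z : ι → ℝ)
    (hR : 0 < R) (hu : ∀ i ∈ s, 0 ≤ u i) (hk : ∀ i ∈ s, 0 ≤ k i) (hz : ∀ i ∈ s, 0 ≤ z i)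
    (hmem : ∑ i ∈ s, blockFootprint R (u i) (k i) (z i) ≤ S) :
    ∑ i ∈ s, u i * k i * z i ≤ S * √(R * S) / (3 * √3) := by
  set m : ι → ℝ := fun i ↦ blockFootprint R (u i) (k i) (z i)
  have m_nonneg : ∀ i ∈ s, 0 ≤ m i := fun i hi ↦
    blockFootprint_nonneg hR.le (hu i hi) (hk i hi) (hz i hi)
  have m_le : ∀ i ∈ s, m i ≤ S := fun i hi ↦ (single_le_sum m_nonneg hi).trans hmem
  calc ∑ i ∈ s, u i * k i * z i ≤ ∑ i ∈ s, m i * √(R * m i) / (3 * √3) :=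
        sum_le_sum fun i hi ↦ mul_mul_le_blockFootprint_mul_sqrt hR (hu i hi) (hk i hi) (hz i hi)
    _ ≤ ∑ i ∈ s, m i * √(R * S) / (3 * √3) := by
        gcongr with i hi
        exacts [m_nonneg i hi, m_le i hi]
    _ = (∑ i ∈ s, m i) * √(R * S) / (3 * √3) := by rw [sum_mul, sum_div]
    _ ≤ S * √(R * S) / (3 * √3) := by gcongr

/-- Non-overlap case of Lemma 2: under the memory-capacity constraint,
`u₁k₁z₁ + u₂k₂z₂ ≤ S√(RS)/(3√3)`. -/
theorem two_block_term_bound (R S u₁ k₁ z₁ u₂ k₂ z₂ : ℝ)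
    (hR : 0 < R) (hS : 0 < S)
    (hu₁ : 0 < u₁) (hk₁ : 0 < k₁) (hz₁ : 0 < z₁)
    (hu₂ : 0 < u₂) (hk₂ : 0 < k₂) (hz₂ : 0 < z₂)
    (hmem : u₁ * k₁ / R + u₂ * k₂ / R + z₁ * k₁ + z₂ * k₂ + u₁ * z₁ + u₂ * z₂ ≤ S) :
    u₁ * k₁ * z₁ + u₂ * k₂ * z₂ ≤ S * Real.sqrt (R * S) / (3 * Real.sqrt 3) := by
  have hfoot : blockFootprint R u₁ k₁ z₁ + blockFootprint R u₂ k₂ z₂ ≤ S := by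
    unfold blockFootprint
    linarith
  simpa using two_block_term_bound_general univ R S ![u₁, u₂] ![k₁, k₂] ![z₁, z₂] hR
    (by simp [hu₁.le, hu₂.le]) (by simp [hk₁.le, hk₂.le]) (by simp [hz₁.le, hz₂.le])
    (by simpa using hfoot)
end

section
/- Let R > 0 and S > 0 be real numbers. Then S·√(R·S)/(3·√3) is the greatest value of the product u·k·z over all positive reals u, k, z satisfying uk/R + zk + uz ≤ S; the maximum is attained at u = k = √(S·R/3) and z = √(S/(3·R)). -/
/-!
The three memory terms `u * k / R`, `z * k` and `u * z` have product `(u * k * z) ^ 2 / R`, so AM-GM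
bounds `u * k * z` in terms of their sum. Equality forces the three terms to agree, which means
`u = k = R * z`; filling the memory then gives `3 * R * z ^ 2 = S`.
-/

theorem twentySeven_mul_le_add_pow_three {A : Type*} [CommRing A] [LinearOrder A]
    [IsStrictOrderedRing A] {x y z : A} (hx : 0 ≤ x) (hy : 0 ≤ y) (hz : 0 ≤ z) :
    27 * (x * y * z) ≤ (x + y + z) ^ 3 := by
  have sum_of_squares : 2 * ((x + y + z) ^ 3 - 27 * (x * y * z)) =
      (x + y + z) * ((x - y) ^ 2 + (y - z) ^ 2 + (z - x) ^ 2) +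
        6 * (x * (y - z) ^ 2 + y * (z - x) ^ 2 + z * (x - y) ^ 2) := by ring
  have nonneg : 0 ≤ 2 * ((x + y + z) ^ 3 - 27 * (x * y * z)) := by
    rw [sum_of_squares]
    positivity
  exact sub_nonneg.mp (nonneg_of_mul_nonneg_right nonneg two_pos)

/-- The on-chip memory occupied by a block computing `u * z` outputs from a `u × k` input block,
whose entries are reused `R` times, and a `k × z` weight block. The summands are the memory for
inputs, weights and outputs, in this order. -/
def blockMemory {K : Type*} [Field K] (R u k z : K) : K :=
  u * k / R + z * k + u * z

theorem blockMemory_mul_mul_self {K : Type*} [Field K] {R : K} (hR : R ≠ 0) (z : K) :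
    blockMemory R (R * z) (R * z) z = 3 * (R * z ^ 2) := by
  unfold blockMemory
  field_simp
  ring

section OrderedField

variable {K : Type*} [Field K] [LinearOrder K] [IsStrictOrderedRing K] {R u k z : K}

theorem blockMemory_nonneg (hR : 0 ≤ R) (hu : 0 ≤ u) (hk : 0 ≤ k) (hz : 0 ≤ z) :
    0 ≤ blockMemory R u k z := by
  unfold blockMemory
  positivity

theorem twentySeven_mul_sq_le_mul_blockMemory_pow_three (hR : 0 < R) (hu : 0 ≤ u) (hk : 0 ≤ k)
    (hz : 0 ≤ z) : 27 * (u * k * z) ^ 2 ≤ R * blockMemory R u k z ^ 3 :=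
  calc 27 * (u * k * z) ^ 2 = R * (27 * (u * k / R * (z * k) * (u * z))) := by field_simp
    _ ≤ R * blockMemory R u k z ^ 3 := by
      unfold blockMemory
      gcongr
      exact twentySeven_mul_le_add_pow_three (by positivity) (by positivity) (by positivity)

end OrderedField

section Real

variable {R S : ℝ}

theorem sq_mul_sqrt_mul_div_three_mul_sqrt_three (hRS : 0 ≤ R * S) :
    (S * √(R * S) / (3 * √3)) ^ 2 = R * S ^ 3 / 27 := by
  rw [div_pow, mul_pow, mul_pow, Real.sq_sqrt hRS, Real.sq_sqrt zero_le_three]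
  ring

theorem mul_mul_le_of_blockMemory_le {u k z : ℝ} (hR : 0 < R) (hu : 0 ≤ u) (hk : 0 ≤ k)
    (hz : 0 ≤ z) (h : blockMemory R u k z ≤ S) :
    u * k * z ≤ S * √(R * S) / (3 * √3) := by
  have hmem : 0 ≤ blockMemory R u k z := blockMemory_nonneg hR.le hu hk hz
  have hS : 0 ≤ S := hmem.trans h
  refine le_of_sq_le_sq ?_ (by positivity)
  rw [sq_mul_sqrt_mul_div_three_mul_sqrt_three (by positivity), le_div_iff₀' (by norm_num)]
  calc 27 * (u * k * z) ^ 2 ≤ R * blockMemory R u k z ^ 3 :=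
        twentySeven_mul_sq_le_mul_blockMemory_pow_three hR hu hk hz
    _ ≤ R * S ^ 3 := by gcongr

theorem sqrt_mul_div_three_eq_mul_sqrt (hR : 0 < R) (S : ℝ) :
    √(S * R / 3) = R * √(S / (3 * R)) := by
  rw [show S * R / 3 = R ^ 2 * (S / (3 * R)) by field_simp, Real.sqrt_mul (sq_nonneg R),
    Real.sqrt_sq hR.le]

theorem blockMemory_sqrt (hR : 0 < R) (hS : 0 ≤ S) :
    blockMemory R √(S * R / 3) √(S * R / 3) √(S / (3 * R)) = S := by
  rw [sqrt_mul_div_three_eq_mul_sqrt hR, blockMemory_mul_mul_self hR.ne',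
    Real.sq_sqrt (by positivity)]
  field_simp

theorem sqrt_mul_sqrt_mul_sqrt_eq (hR : 0 < R) (hS : 0 ≤ S) :
    √(S * R / 3) * √(S * R / 3) * √(S / (3 * R)) = S * √(R * S) / (3 * √3) := by
  rw [← sq_eq_sq₀ (by positivity) (by positivity),
    sq_mul_sqrt_mul_div_three_mul_sqrt_three (by positivity),
    Real.mul_self_sqrt (by positivity), mul_pow, Real.sq_sqrt (by positivity)]
  field_simp
  norm_num

end Real

/-- Single-block optimum in Lemma 2: `S√(RS)/(3√3)` is the greatest value of `u*k*z`
over positive reals with `uk/R + zk + uz ≤ S`, attained at `u = k = √(SR/3)` and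
`z = √(S/(3R))`. -/
theorem single_block_max (R S : ℝ) (hR : 0 < R) (hS : 0 < S) :
    IsGreatest {y : ℝ | ∃ u k z : ℝ, 0 < u ∧ 0 < k ∧ 0 < z ∧
        u * k / R + z * k + u * z ≤ S ∧ y = u * k * z}
      (S * Real.sqrt (R * S) / (3 * Real.sqrt 3)) ∧
    Real.sqrt (S * R / 3) * Real.sqrt (S * R / 3) * Real.sqrt (S / (3 * R)) =
      S * Real.sqrt (R * S) / (3 * Real.sqrt 3) := by
  have value_eq := sqrt_mul_sqrt_mul_sqrt_eq hR hS.le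
  refine ⟨⟨?attained, ?upper_bound⟩, value_eq⟩
  case attained =>
    exact ⟨√(S * R / 3), √(S * R / 3), √(S / (3 * R)), by positivity, by positivity,
      by positivity, (blockMemory_sqrt hR hS.le).le, value_eq.symm⟩
  case upper_bound =>
    rintro _ ⟨u, k, z, hu, hk, hz, hmem, rfl⟩
    exact mul_mul_le_of_blockMemory_le hR hu.le hk.le hz.le hmem
end

section
/- Let R > 0, S > 0 and let u₁, k₁, z₁, u₂, k₂, z₂ be positive real numbers. Set Σ = z₁k₁ + z₂k₂ + u₁z₁ + u₂z₂, and assume u₁k₁ ≤ R·(S − Σ) and u₂k₂ ≤ R·(S − Σ). Then u₁k₁z₁ + u₂k₂z₂ ≤ S·√(R·S)/(3·√3). -/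
/-!
Write `T` for the memory `∑ zᵢkᵢ + ∑ uᵢzᵢ` and `m = √(R(S − T))`. By AM-GM,
`√(uᵢkᵢ) ≤ (uᵢ + kᵢ) / 2`, and the constraint says `√(uᵢkᵢ) ≤ m`; multiplying,
`uᵢkᵢ ≤ (uᵢ + kᵢ)m / 2`. Weighting by `zᵢ` and summing bounds the number of terms by `T m / 2`,
whatever the number of blocks. For fixed `S`, `T √(S − T)` is largest at `T = 2S / 3`, which gives
the constant.
-/

section OrderedRing

variable {A : Type*} [CommRing A] [LinearOrder A] [IsStrictOrderedRing A]

theorem two_mul_mul_le_add_mul_of_mul_le_sq {u k m : A} (hu : 0 ≤ u) (hk : 0 ≤ k) (hm : 0 ≤ m)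
    (h : u * k ≤ m ^ 2) : 2 * (u * k) ≤ (u + k) * m := by
  refine (sq_le_sq₀ (by positivity) (by positivity)).1 ?_
  calc (2 * (u * k)) ^ 2 = 4 * u * k * (u * k) := by ring
    _ ≤ (u + k) ^ 2 * m ^ 2 :=
        mul_le_mul (four_mul_le_sq_add u k) h (mul_nonneg hu hk) (sq_nonneg _)
    _ = ((u + k) * m) ^ 2 := by ring

theorem two_mul_sum_mul_mul_le_of_mul_le_sq {ι : Type*} (s : Finset ι) {u k z : ι → A} {m : A}
    (hu : ∀ i ∈ s, 0 ≤ u i) (hk : ∀ i ∈ s, 0 ≤ k i) (hz : ∀ i ∈ s, 0 ≤ z i) (hm : 0 ≤ m)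
    (h : ∀ i ∈ s, u i * k i ≤ m ^ 2) :
    2 * ∑ i ∈ s, u i * k i * z i ≤ (∑ i ∈ s, z i * k i + ∑ i ∈ s, u i * z i) * m := by
  rw [← Finset.sum_add_distrib, Finset.mul_sum, Finset.sum_mul]
  refine Finset.sum_le_sum fun i hi => ?_
  calc 2 * (u i * k i * z i) = 2 * (u i * k i) * z i := by ring
    _ ≤ (u i + k i) * m * z i :=
        mul_le_mul_of_nonneg_right
          (two_mul_mul_le_add_mul_of_mul_le_sq (hu i hi) (hk i hi) hm (h i hi)) (hz i hi)
    _ = (z i * k i + u i * z i) * m := by ring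

theorem twenty_seven_mul_sq_mul_le_four_mul_add_pow_three {a b : A}
    (ha : 0 ≤ a) (hb : 0 ≤ b) :
    27 * (a ^ 2 * b) ≤ 4 * (a + b) ^ 3 := by
  have hgap : 4 * (a + b) ^ 3 - 27 * (a ^ 2 * b) = (a - 2 * b) ^ 2 * (4 * a + b) := by ring
  exact sub_nonneg.1 (hgap ▸ mul_nonneg (sq_nonneg _) (by positivity))

end OrderedRing

theorem three_mul_sqrt_three_mul_mul_sqrt_le {a b : ℝ} (ha : 0 ≤ a) (hb : 0 ≤ b) :
    3 * √3 * (a * √b) ≤ 2 * ((a + b) * √(a + b)) := by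
  refine (sq_le_sq₀ (by positivity) (by positivity)).1 ?_
  calc (3 * √3 * (a * √b)) ^ 2 = 27 * (a ^ 2 * b) := by
        simp only [mul_pow, Real.sq_sqrt hb, Real.sq_sqrt zero_le_three]
        ring
    _ ≤ 4 * (a + b) ^ 3 := twenty_seven_mul_sq_mul_le_four_mul_add_pow_three ha hb
    _ = (2 * ((a + b) * √(a + b))) ^ 2 := by
        simp only [mul_pow, Real.sq_sqrt (add_nonneg ha hb)]
        ring

theorem overlapped_term_bound_general {ι : Type*} (s : Finset ι) {R S : ℝ} {u k z : ι → ℝ}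
    (hR : 0 < R) (hS : 0 ≤ S)
    (hu : ∀ i ∈ s, 0 ≤ u i) (hk : ∀ i ∈ s, 0 ≤ k i) (hz : ∀ i ∈ s, 0 ≤ z i)
    (h : ∀ i ∈ s, u i * k i ≤ R * (S - (∑ j ∈ s, z j * k j + ∑ j ∈ s, u j * z j))) :
    ∑ i ∈ s, u i * k i * z i ≤ S * √(R * S) / (3 * √3) := by
  set T := ∑ j ∈ s, z j * k j + ∑ j ∈ s, u j * z j with hT
  have hT₀ : 0 ≤ T :=
    add_nonneg (Finset.sum_nonneg fun i hi => mul_nonneg (hz i hi) (hk i hi))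
      (Finset.sum_nonneg fun i hi => mul_nonneg (hu i hi) (hz i hi))
  have hTS : 0 ≤ S - T := by
    rcases s.eq_empty_or_nonempty with rfl | ⟨i, hi⟩
    · simpa [hT] using hS
    · exact nonneg_of_mul_nonneg_right ((mul_nonneg (hu i hi) (hk i hi)).trans (h i hi)) hR
  have hterms : 2 * ∑ i ∈ s, u i * k i * z i ≤ T * √(R * (S - T)) :=
    two_mul_sum_mul_mul_le_of_mul_le_sq s hu hk hz (Real.sqrt_nonneg _) fun i hi =>
      (h i hi).trans_eq (Real.sq_sqrt (mul_nonneg hR.le hTS)).symm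
  have hmax : 3 * √3 * (T * √(S - T)) ≤ 2 * (S * √S) := by
    simpa only [add_sub_cancel] using three_mul_sqrt_three_mul_mul_sqrt_le hT₀ hTS
  rw [le_div_iff₀ (by positivity)]
  refine le_of_mul_le_mul_left ?_ (zero_lt_two' ℝ)
  calc 2 * ((∑ i ∈ s, u i * k i * z i) * (3 * √3))
      = 3 * √3 * (2 * ∑ i ∈ s, u i * k i * z i) := by ring
    _ ≤ 3 * √3 * (T * √(R * (S - T))) := by gcongr
    _ = √R * (3 * √3 * (T * √(S - T))) := by rw [Real.sqrt_mul hR.le]; ring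
    _ ≤ √R * (2 * (S * √S)) := by gcongr
    _ = 2 * (S * √(R * S)) := by rw [Real.sqrt_mul hR.le]; ring

/-- Overlapped-input case of Lemma 2: with `Σ = z₁k₁ + z₂k₂ + u₁z₁ + u₂z₂` and
`uᵢkᵢ ≤ R(S − Σ)`, the number of produced terms satisfies
`u₁k₁z₁ + u₂k₂z₂ ≤ S√(RS)/(3√3)`. -/
theorem overlapped_term_bound (R S u₁ k₁ z₁ u₂ k₂ z₂ : ℝ)
    (hR : 0 < R) (hS : 0 < S)
    (hu₁ : 0 < u₁) (hk₁ : 0 < k₁) (hz₁ : 0 < z₁)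
    (hu₂ : 0 < u₂) (hk₂ : 0 < k₂) (hz₂ : 0 < z₂)
    (h₁ : u₁ * k₁ ≤ R * (S - (z₁ * k₁ + z₂ * k₂ + u₁ * z₁ + u₂ * z₂)))
    (h₂ : u₂ * k₂ ≤ R * (S - (z₁ * k₁ + z₂ * k₂ + u₁ * z₁ + u₂ * z₂))) :
    u₁ * k₁ * z₁ + u₂ * k₂ * z₂ ≤ S * Real.sqrt (R * S) / (3 * Real.sqrt 3) := by
  simpa [Fin.forall_fin_two, ← add_assoc, *, le_of_lt] using overlapped_term_bound_general
    Finset.univ (u := ![u₁, u₂]) (k := ![k₁, k₂]) (z := ![z₁, z₂]) hR hS.le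
end
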